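/- Let w ∈ F_d be a word such that every element of SU(2) is a product of two w-values. Then for every integer n ≥ 2, every element of SU(n) is a product of two w-values; that is, w(SU(n))·w(SU(n)) = SU(n). -/

import Mathlib

/-- The set of `w`-values in the subgroup of `G` given by the set `S`:
elements obtained by evaluating the word `w` at a `d`-tuple of elements of `S`. -/
def wordValuesIn {d : ℕ} {G : Type*} [Group G] (w : FreeGroup (Fin d)) (S : Set G) : Set G :=
  {x | ∃ g : Fin d → G, (∀ i, g i ∈ S) ∧ FreeGroup.lift g w = x}

/-- `SU(n)`, the special unitary group, as the subset of the unitary group consisting of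
matrices of determinant 1. -/
def SU (n : ℕ) : Set (Matrix.unitaryGroup (Fin n) ℂ) :=
  {M | (M : Matrix (Fin n) (Fin n) ℂ).det = 1}

/-!
Let `C` be a scalar multiple of the cyclic shift in `U(n)`. Every diagonal matrix of determinant
`1` is a commutator `C S C⁻¹ S⁻¹` with `S` diagonal, so every element of `SU(n)` is a conjugate of
`C` times a conjugate of `C⁻¹`. The eigenvalues of `C` are a scalar times the `n`-th roots of unity,
and for the right scalar these are also the eigenvalues of the image of `T = diag(z, z⁻¹)`,
`z = exp(πi / n)`, under the `(n - 1)`-st symmetric power `SU(2) → SU(n)`. Hence it suffices that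
`T` and `T⁻¹` are `w`-values in `SU(2)`. There the set of `w`-values is connected, contains `1` and
is closed under conjugation, and the trace separates conjugacy classes; so it contains every element
whose trace is at least that of some `w`-value. Finally, if `-1 = a b`, then `a` or `b` has trace
`≤ 0 ≤ 2 cos(π / n) = tr T`.
-/

open Matrix Polynomial

section WordValues

variable {d : ℕ} {G : Type*} [Group G] (w : FreeGroup (Fin d))

lemma map_mem_wordValuesIn {H : Type*} [Group H] (φ : G →* H) {S : Set G} {S' : Set H}
    (hφ : Set.MapsTo φ S S') {x : G} (hx : x ∈ wordValuesIn w S) : φ x ∈ wordValuesIn w S' := by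
  obtain ⟨g, hg, rfl⟩ := hx
  have hlift : FreeGroup.lift (φ ∘ g) = φ.comp (FreeGroup.lift g) := by
    ext i
    simp only [FreeGroup.lift_apply_of, MonoidHom.comp_apply, Function.comp_apply]
  exact ⟨φ ∘ g, fun i => hφ (hg i), DFunLike.congr_fun hlift w⟩

lemma one_mem_wordValuesIn {S : Set G} (hS : 1 ∈ S) : 1 ∈ wordValuesIn w S :=
  ⟨fun _ => 1, fun _ => hS, DFunLike.congr_fun (FreeGroup.ext_hom _ 1 fun _ => by simp) w⟩

lemma wordValuesIn_subset (H : Subgroup G) : wordValuesIn w (H : Set G) ⊆ H := by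
  rintro _ ⟨g, hg, rfl⟩
  have hrange : (FreeGroup.lift g).range ≤ H :=
    FreeGroup.range_lift_le (Set.range_subset_iff.2 hg)
  exact hrange ⟨w, rfl⟩

lemma mem_wordValuesIn_of_isConj (N : Subgroup G) [N.Normal] {x y : G} (hxy : IsConj x y)
    (hx : x ∈ wordValuesIn w (N : Set G)) : y ∈ wordValuesIn w (N : Set G) := by
  obtain ⟨u, rfl⟩ := isConj_iff.1 hxy
  exact map_mem_wordValuesIn w (MulAut.conj u).toMonoidHom
    (fun g hg => ‹N.Normal›.conj_mem g hg u) hx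

variable [TopologicalSpace G] [IsTopologicalGroup G]

lemma continuous_lift_apply : Continuous fun g : Fin d → G => FreeGroup.lift g w := by
  induction w using FreeGroup.induction_on with
  | C1 => simpa only [map_one] using continuous_const
  | of i => simpa only [FreeGroup.lift_apply_of] using continuous_apply i
  | inv_of i h => simpa only [map_inv] using h.fun_inv
  | mul a b ha hb => simpa only [map_mul] using ha.fun_mul hb

lemma isPreconnected_wordValuesIn {S : Set G} (hS : IsPreconnected S) :
    IsPreconnected (wordValuesIn w S) := by
  have himage : wordValuesIn w S = (fun g => FreeGroup.lift g w) '' Set.univ.pi fun _ => S := by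
    ext x
    simp only [wordValuesIn, Set.mem_ofPred_eq, Set.mem_image, Set.mem_univ_pi]
  rw [himage]
  exact (isPreconnected_univ_pi fun _ => hS).image _
    (continuous_lift_apply w).continuousOn

end WordValues

lemma exists_perm_comp_eq_of_map_eq {ι α : Type*} [Fintype ι] {f g : ι → α}
    (h : Finset.univ.val.map f = Finset.univ.val.map g) : ∃ σ : Equiv.Perm ι, f ∘ σ = g := by
  classical
  have hcard (c : α) : Fintype.card {i // g i = c} = Fintype.card {i // f i = c} := by
    have hcount := congrArg (Multiset.count c) h
    simp only [Multiset.count_map, eq_comm (a := c)] at hcount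
    simpa only [Fintype.card_subtype] using! hcount.symm
  exact ⟨Equiv.ofFiberEquiv fun c => Fintype.equivOfCardEq (hcard c),
    funext (Equiv.ofFiberEquiv_map _)⟩

section Unitary

variable {ι : Type*} [Fintype ι] [DecidableEq ι]

open scoped Matrix.Norms.L2Operator in
/- A normal matrix is a polynomial in a Hermitian one, obtained by moving its finitely many
eigenvalues to the real line by any injection. -/
lemma exists_isHermitian_aeval_eq (A : Matrix ι ι ℂ) [IsStarNormal A] :
    ∃ (H : Matrix ι ι ℂ) (p : ℂ[X]), H.IsHermitian ∧ aeval H p = A := by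
  obtain ⟨e⟩ : Nonempty (ℂ ≃ ℝ) := Cardinal.eq.1 (by rw [Cardinal.mk_complex, Cardinal.mk_real])
  have hfin : (spectrum ℂ A).Finite := A.finite_spectrum
  let f : ℂ → ℂ := fun z => e z
  have hf : Set.InjOn f hfin.toFinset := (Complex.ofReal_injective.comp e.injective).injOn
  have hcont : ContinuousOn f (spectrum ℂ A) := hfin.continuousOn f
  let p : ℂ[X] := Lagrange.interpolate hfin.toFinset f id
  refine ⟨cfc f A, p, ?_, ?_⟩
  · have hstar : star (cfc f A) = cfc f A := by
      rw [← cfc_star]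
      simp only [f, Complex.star_def, Complex.conj_ofReal]
    exact hstar
  · calc aeval (cfc f A) p = cfc (fun z => p.eval z) (cfc f A) := (cfc_polynomial p _).symm
      _ = cfc ((fun z => p.eval z) ∘ f) A := (cfc_comp _ f A).symm
      _ = cfc id A := cfc_congr fun z hz =>
          Lagrange.eval_interpolate_at_node id hf (hfin.mem_toFinset.2 hz)
      _ = A := cfc_id ℂ A

lemma exists_unitary_diagonal (A : Matrix ι ι ℂ) [IsStarNormal A] :
    ∃ (u : unitaryGroup ι ℂ) (t : ι → ℂ),
      A = Unitary.conjStarAlgAut ℂ _ u (diagonal t) := by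
  obtain ⟨H, p, hH, rfl⟩ := exists_isHermitian_aeval_eq A
  refine ⟨hH.eigenvectorUnitary, aeval (RCLike.ofReal ∘ hH.eigenvalues : ι → ℂ) p, ?_⟩
  conv_lhs => rw [hH.spectral_theorem]
  rw [aeval_algHom_apply, ← diagonalAlgHom_apply (R := ℂ), ← diagonalAlgHom_apply (R := ℂ),
    aeval_algHom_apply]

variable (ι) in
/-- The determinant of a unitary matrix as a homomorphism; its kernel for `ι = Fin n` is `SU n`. -/
def unitaryDet : unitaryGroup ι ℂ →* ℂ :=
  detMonoidHom.comp (unitaryGroup ι ℂ).subtype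

/-- The standard maximal torus of `U(ι)`: diagonal matrices with entries on the unit circle. -/
def diagonalTorus : (ι → Circle) →* unitaryGroup ι ℂ where
  toFun t := ⟨diagonal fun i => (t i : ℂ), by
    rw [mem_unitaryGroup_iff, star_eq_conjTranspose, diagonal_conjTranspose,
      diagonal_mul_diagonal, ← diagonal_one]
    simp only [Pi.star_apply, Complex.star_def, Complex.mul_conj, Circle.normSq_coe,
      Complex.ofReal_one]⟩
  map_one' := Subtype.ext diagonal_one
  map_mul' s t := Subtype.ext (diagonal_mul_diagonal _ _).symm

lemma coe_diagonalTorus (t : ι → Circle) :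
    (diagonalTorus t : Matrix ι ι ℂ) = diagonal fun i => (t i : ℂ) := rfl

/-- The unitary matrix of a permutation, with Mathlib's convention `permMatrix σ *ᵥ v = v ∘ σ`. -/
def permUnitary (σ : Equiv.Perm ι) : unitaryGroup ι ℂ :=
  ⟨σ.permMatrix ℂ, by
    rw [mem_unitaryGroup_iff, star_eq_conjTranspose, conjTranspose_permMatrix, ← permMatrix_mul,
      inv_mul_cancel, permMatrix_one]⟩

lemma unitaryDet_diagonalTorus (t : ι → Circle) :
    unitaryDet ι (diagonalTorus t) = ((∏ i, t i : Circle) : ℂ) :=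
  (det_diagonal).trans (map_prod Circle.coeHom t Finset.univ).symm

lemma continuous_diagonalTorus : Continuous (diagonalTorus (ι := ι)) :=
  Continuous.subtype_mk
    (Continuous.matrix_diagonal (continuous_pi fun i => (continuous_apply i).subtype_val)) _

lemma permUnitary_mul_diagonalTorus (σ : Equiv.Perm ι) (t : ι → Circle) :
    permUnitary σ * diagonalTorus t = diagonalTorus (t ∘ σ) * permUnitary σ := by
  ext i j
  change (σ.toPEquiv.toMatrix * diagonal fun i => (t i : ℂ) : Matrix ι ι ℂ) i j =
    ((diagonal fun i => (t (σ i) : ℂ)) * σ.toPEquiv.toMatrix : Matrix ι ι ℂ) i j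
  rw [mul_diagonal, diagonal_mul, PEquiv.toMatrix_apply, Equiv.toPEquiv_apply]
  split_ifs with h
  · rw [Option.mem_some_iff.1 h, mul_comm]
  · rw [zero_mul, mul_zero]

lemma isConj_diagonalTorus_comp_perm (t : ι → Circle) (σ : Equiv.Perm ι) :
    IsConj (diagonalTorus t) (diagonalTorus (t ∘ σ)) :=
  isConj_iff.2 ⟨permUnitary σ, by rw [permUnitary_mul_diagonalTorus, mul_inv_cancel_right]⟩

lemma exists_isConj_diagonalTorus (U : unitaryGroup ι ℂ) :
    ∃ t : ι → Circle, IsConj (diagonalTorus t) U := by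
  obtain ⟨u, t, hU⟩ := exists_unitary_diagonal (U : Matrix ι ι ℂ)
  have hdiag : diagonal t ∈ unitaryGroup ι ℂ := by
    rw [← (Unitary.conjStarAlgAut ℂ _ u).symm_apply_apply (diagonal t), ← hU]
    exact Unitary.map_mem _ U.2
  have ht_norm (i : ι) : t i ∈ Submonoid.unitSphere ℂ := by
    have hmul := congr_fun₂ (mem_unitaryGroup_iff.1 hdiag) i i
    rw [star_eq_conjTranspose, diagonal_conjTranspose, diagonal_mul_diagonal, diagonal_apply_eq,
      one_apply_eq, Pi.star_apply, Complex.star_def, Complex.mul_conj'] at hmul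
    rw [← SetLike.mem_coe, Submonoid.coe_unitSphere, mem_sphere_zero_iff_norm]
    exact (pow_eq_one_iff_of_nonneg (norm_nonneg _) two_ne_zero).1 (by exact_mod_cast hmul)
  exact ⟨fun i => ⟨t i, ht_norm i⟩, isConj_iff.2 ⟨u, Subtype.ext hU.symm⟩⟩

lemma charpoly_eq_of_isConj {U V : unitaryGroup ι ℂ} (h : IsConj U V) :
    (U : Matrix ι ι ℂ).charpoly = (V : Matrix ι ι ℂ).charpoly := by
  obtain ⟨u, rfl⟩ := isConj_iff.1 h
  calc (U : Matrix ι ι ℂ).charpoly = (u⁻¹ * (u * U) : unitaryGroup ι ℂ).1.charpoly := by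
        rw [inv_mul_cancel_left]
    _ = (u * U * u⁻¹ : unitaryGroup ι ℂ).1.charpoly := charpoly_mul_comm _ _

lemma isConj_iff_charpoly_eq {U V : unitaryGroup ι ℂ} :
    IsConj U V ↔ (U : Matrix ι ι ℂ).charpoly = (V : Matrix ι ι ℂ).charpoly := by
  refine ⟨charpoly_eq_of_isConj, fun h => ?_⟩
  obtain ⟨s, hs⟩ := exists_isConj_diagonalTorus U
  obtain ⟨t, ht⟩ := exists_isConj_diagonalTorus V
  have hroots (v : ι → Circle) : (diagonalTorus v : Matrix ι ι ℂ).charpoly.roots =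
      (Finset.univ.val.map v).map Circle.coeHom := by
    rw [coe_diagonalTorus, charpoly_diagonal, Finset.prod_eq_multiset_prod,
      ← roots_multiset_prod_X_sub_C ((Finset.univ.val.map v).map Circle.coeHom),
      Multiset.map_map, Multiset.map_map]
    rfl
  have hst : Finset.univ.val.map s = Finset.univ.val.map t := by
    refine Multiset.map_injective (f := Circle.coeHom) Circle.coe_injective ?_
    rw [← hroots, ← hroots, charpoly_eq_of_isConj hs, h, charpoly_eq_of_isConj ht]
  obtain ⟨σ, rfl⟩ := exists_perm_comp_eq_of_map_eq hst
  exact hs.symm.trans ((isConj_diagonalTorus_comp_perm s σ).trans ht)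

end Unitary

section SpecialUnitary

variable {n : ℕ}

lemma SU_eq_ker_unitaryDet (n : ℕ) :
    SU n = ((unitaryDet (Fin n)).ker : Set (unitaryGroup (Fin n) ℂ)) := rfl

lemma one_mem_SU (n : ℕ) : 1 ∈ SU n := one_mem (unitaryDet (Fin n)).ker

lemma mem_wordValuesIn_SU_of_isConj {d : ℕ} {w : FreeGroup (Fin d)}
    {x y : unitaryGroup (Fin n) ℂ} (hxy : IsConj x y) (hx : x ∈ wordValuesIn w (SU n)) :
    y ∈ wordValuesIn w (SU n) :=
  mem_wordValuesIn_of_isConj w (unitaryDet (Fin n)).ker hxy hx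

lemma diagonalTorus_mem_SU {t : Fin n → Circle} : diagonalTorus t ∈ SU n ↔ ∏ i, t i = 1 := by
  rw [SU_eq_ker_unitaryDet, SetLike.mem_coe, MonoidHom.mem_ker, unitaryDet_diagonalTorus,
    Circle.coe_eq_one]

lemma exists_isConj_diagonalTorus_of_mem_SU {x : unitaryGroup (Fin n) ℂ} (hx : x ∈ SU n) :
    ∃ t : Fin n → Circle, ∏ i, t i = 1 ∧ IsConj (diagonalTorus t) x := by
  obtain ⟨t, ht⟩ := exists_isConj_diagonalTorus x
  refine ⟨t, diagonalTorus_mem_SU.1 ?_, ht⟩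
  exact (isConj_iff_eq.1 ((unitaryDet (Fin n)).map_isConj ht)).trans hx

lemma exists_comp_finRotate_eq_mul {A : Type*} [CommMonoid A] (t : Fin n → A)
    (ht : ∏ i, t i = 1) : ∃ s : Fin n → A, s ∘ finRotate n = s * t := by
  obtain _ | m := n
  · exact ⟨t, Subsingleton.elim _ _⟩
  refine ⟨fun i => Fin.partialProd t i.castSucc, funext fun i => ?_⟩
  have hsucc : Fin.partialProd t (finRotate (m + 1) i).castSucc = Fin.partialProd t i.succ := by
    induction i using Fin.lastCases with
    | last =>
      rw [finRotate_last, Fin.castSucc_zero, Fin.partialProd_zero, ← ht, Fin.succ_last,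
        ← List.prod_ofFn, Fin.partialProd, Fin.val_last, List.take_of_length_le (by simp)]
    | cast j => rw [finRotate_apply, Fin.coeSucc_eq_succ, Fin.succ_castSucc]
  exact hsucc.trans (Fin.partialProd_succ t i)

lemma isPreconnected_SU (n : ℕ) : IsPreconnected (SU n) := by
  refine isPreconnected_of_forall 1 fun x hx => ?_
  obtain ⟨t, ht, htx⟩ := exists_isConj_diagonalTorus_of_mem_SU hx
  obtain ⟨s, hs⟩ := exists_comp_finRotate_eq_mul t ht
  obtain ⟨g, rfl⟩ := isConj_iff.1 htx
  let φ (r : Fin n → Circle) := g * diagonalTorus ((r ∘ finRotate n) / r) * g⁻¹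
  have hφ : Continuous φ := by
    refine (continuous_const.mul (continuous_diagonalTorus.comp ?_)).mul continuous_const
    exact (continuous_pi fun i => continuous_apply _).div' continuous_id
  refine ⟨Set.range φ, ?_, ⟨1, ?_⟩, ⟨s, ?_⟩, isPreconnected_range hφ⟩
  · rintro _ ⟨r, rfl⟩
    refine (unitaryDet (Fin n)).normal_ker.conj_mem _ ?_ g
    refine diagonalTorus_mem_SU.2 ?_
    simp only [Pi.div_apply, Function.comp_apply, Finset.prod_div_distrib,
      Equiv.prod_comp, div_self']
  · simp only [φ, Pi.one_comp, div_self', map_one, mul_one, mul_inv_cancel]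
  · simp only [φ, hs, mul_div_cancel_left]

lemma commute_diagonalTorus_const {ι : Type*} [Fintype ι] [DecidableEq ι] (c : Circle)
    (U : unitaryGroup ι ℂ) : Commute (diagonalTorus fun _ => c) U :=
  Subtype.ext (scalar_commute (c : ℂ) (Commute.all _) U.1)

lemma isConj_permUnitary_finRotate {ω : Circle} (hω : IsPrimitiveRoot ω n) :
    IsConj (permUnitary (finRotate n)) (diagonalTorus fun k : Fin n => ω ^ (k : ℕ)) := by
  let V : Matrix (Fin n) (Fin n) ℂ := vandermonde fun i => (ω : ℂ) ^ (i : ℕ)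
  have hinj : Function.Injective fun i : Fin n => (ω : ℂ) ^ (i : ℕ) := fun i j hij =>
    Fin.ext (hω.pow_inj i.2 j.2 (Circle.ext (by simpa using hij)))
  have hV : IsUnit V.det := (det_vandermonde_ne_zero_iff.2 hinj).isUnit
  let D : Matrix (Fin n) (Fin n) ℂ := diagonal fun k => ((ω ^ (k : ℕ) : Circle) : ℂ)
  have hrotate (i : Fin n) : (ω : ℂ) ^ (finRotate n i : ℕ) = ω ^ (i : ℕ) * ω := by
    obtain ⟨m, rfl⟩ := Nat.exists_eq_succ_of_ne_zero i.neZero.ne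
    have hωn : (ω : ℂ) ^ (m + 1) = 1 := by rw [← Circle.coe_pow, hω.pow_eq_one, Circle.coe_one]
    rw [finRotate_apply, ← pow_succ, pow_eq_pow_mod (i + 1 : ℕ) hωn, Fin.val_add, Fin.val_one',
      Nat.add_mod_mod]
  have heigen : (permUnitary (finRotate n)).1 * V = V * D := by
    ext i j
    rw [mul_diagonal]
    change ((finRotate n).toPEquiv.toMatrix * vandermonde _ : Matrix _ _ ℂ) i j =
      vandermonde _ i j * ((ω ^ (j : ℕ) : Circle) : ℂ)
    rw [PEquiv.toMatrix_toPEquiv_mul, submatrix_apply, vandermonde_apply, vandermonde_apply,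
      hrotate, mul_pow, Circle.coe_pow, id]
  refine isConj_iff_charpoly_eq.2 ?_
  calc (permUnitary (finRotate n)).1.charpoly = (V * D * V⁻¹).charpoly := by
        rw [← heigen, mul_nonsing_inv_cancel_right _ _ hV]
    _ = D.charpoly := by rw [charpoly_mul_comm, nonsing_inv_mul_cancel_left _ _ hV]

lemma isConj_diagonalTorus_scaledShift {ω : Circle} (hω : IsPrimitiveRoot ω n) (c : Circle) :
    IsConj (diagonalTorus fun k : Fin n => c * ω ^ (k : ℕ))
      ((diagonalTorus fun _ => c) * permUnitary (finRotate n)) := by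
  obtain ⟨u, hu⟩ := isConj_iff.1 (isConj_permUnitary_finRotate hω).symm
  refine isConj_iff.2 ⟨u, ?_⟩
  calc u * diagonalTorus (fun k : Fin n => c * ω ^ (k : ℕ)) * u⁻¹
      = u * ((diagonalTorus fun _ => c) * diagonalTorus fun k : Fin n => ω ^ (k : ℕ)) * u⁻¹ := by
        rw [← map_mul]; rfl
    _ = (diagonalTorus fun _ => c) * (u * (diagonalTorus fun k : Fin n => ω ^ (k : ℕ)) * u⁻¹) := by
        simp only [mul_assoc, (commute_diagonalTorus_const c u).symm.left_comm]
    _ = (diagonalTorus fun _ => c) * permUnitary (finRotate n) := by rw [hu]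

lemma exists_isConj_mul_isConj_inv_eq {ω : Circle} (hω : IsPrimitiveRoot ω n) (c : Circle)
    {x : unitaryGroup (Fin n) ℂ} (hx : x ∈ SU n) :
    ∃ a b, IsConj (diagonalTorus fun k : Fin n => c * ω ^ (k : ℕ)) a ∧
      IsConj (diagonalTorus fun k : Fin n => c * ω ^ (k : ℕ))⁻¹ b ∧ x = a * b := by
  obtain ⟨t, ht, htx⟩ := exists_isConj_diagonalTorus_of_mem_SU hx
  obtain ⟨s, hs⟩ := exists_comp_finRotate_eq_mul t ht
  obtain ⟨g, rfl⟩ := isConj_iff.1 htx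
  obtain ⟨u, hu⟩ := isConj_iff.1 (isConj_diagonalTorus_scaledShift hω c)
  set C : unitaryGroup (Fin n) ℂ := (diagonalTorus fun _ => c) * permUnitary (finRotate n) with hC
  let S : unitaryGroup (Fin n) ℂ := diagonalTorus s
  have hCS : C * S = diagonalTorus t * S * C := by
    rw [hC, mul_assoc, permUnitary_mul_diagonalTorus, hs, mul_comm s, map_mul,
      (commute_diagonalTorus_const c _).left_comm]
  have hcomm : diagonalTorus t = C * (S * C⁻¹ * S⁻¹) := by
    rw [← mul_assoc, ← mul_assoc, hCS, mul_inv_cancel_right, mul_inv_cancel_right]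
  refine ⟨g * C * g⁻¹, g * (S * C⁻¹ * S⁻¹) * g⁻¹, isConj_iff.2 ⟨g * u, ?_⟩,
    isConj_iff.2 ⟨g * S * u, ?_⟩, ?_⟩
  · rw [← hu]; group
  · rw [← hu]; group
  · rw [hcomm, conj_mul]

end SpecialUnitary

section SpecialUnitaryTwo

variable {a b : unitaryGroup (Fin 2) ℂ}

lemma star_eq_adjugate_of_mem_SU {n : ℕ} {x : unitaryGroup (Fin n) ℂ} (hx : x ∈ SU n) :
    star (x : Matrix (Fin n) (Fin n) ℂ) = adjugate x := by
  have hdet : (x : Matrix (Fin n) (Fin n) ℂ).det = 1 := hx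
  calc star x.1 = star x.1 * (x.1 * adjugate x.1) := by rw [mul_adjugate, hdet, one_smul, mul_one]
    _ = adjugate x.1 := by rw [← mul_assoc, UnitaryGroup.star_mul_self, one_mul]

lemma trace_eq_ofReal_of_mem_SU_two (ha : a ∈ SU 2) : a.1.trace = (a.1.trace.re : ℂ) := by
  refine (Complex.conj_eq_iff_re.1 ?_).symm
  rw [← Complex.star_def, ← trace_conjTranspose, ← star_eq_conjTranspose,
    star_eq_adjugate_of_mem_SU ha, trace_fin_two, adjugate_fin_two, trace_fin_two]
  exact add_comm _ _

lemma isConj_of_mem_SU_two (ha : a ∈ SU 2) (hb : b ∈ SU 2)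
    (h : a.1.trace.re = b.1.trace.re) : IsConj a b := by
  have hdet : a.1.det = b.1.det := Eq.trans ha (Eq.symm hb)
  rw [isConj_iff_charpoly_eq, charpoly_fin_two, charpoly_fin_two, hdet,
    trace_eq_ofReal_of_mem_SU_two ha, trace_eq_ofReal_of_mem_SU_two hb, h]

lemma trace_re_le_card {ι : Type*} [Fintype ι] [DecidableEq ι] (x : unitaryGroup ι ℂ) :
    x.1.trace.re ≤ Fintype.card ι := by
  rw [trace, Complex.re_sum]
  calc ∑ i, (x.1 i i).re ≤ ∑ _i : ι, (1 : ℝ) := Finset.sum_le_sum fun i _ =>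
        (Complex.re_le_norm _).trans (entry_norm_bound_of_unitary x.2 i i)
    _ = Fintype.card ι := by simp

lemma neg_one_mem_SU_two : -1 ∈ SU 2 := by
  change (-1 : Matrix (Fin 2) (Fin 2) ℂ).det = 1
  rw [det_neg, det_one, Fintype.card_fin, mul_one, neg_one_sq]

lemma trace_re_inv {ι : Type*} [Fintype ι] [DecidableEq ι] (x : unitaryGroup ι ℂ) :
    x⁻¹.1.trace.re = x.1.trace.re := by
  change x.1ᴴ.trace.re = _
  rw [trace_conjTranspose, Complex.star_def, Complex.conj_re]

lemma trace_re_eq_neg_of_mul_eq_neg_one {ι : Type*} [Fintype ι] [DecidableEq ι]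
    {x y : unitaryGroup ι ℂ} (h : x * y = -1) : y.1.trace.re = -x.1.trace.re := by
  have hy : y.1 = -x.1ᴴ := by
    calc y.1 = x.1ᴴ * (x * y : unitaryGroup ι ℂ).1 := by
          rw [← star_eq_conjTranspose, UnitaryGroup.mul_val, ← mul_assoc,
            UnitaryGroup.star_mul_self, one_mul]
      _ = -x.1ᴴ := by rw [h]; exact mul_neg_one _
  rw [hy, trace_neg, trace_conjTranspose, Complex.neg_re, Complex.star_def, Complex.conj_re]

variable {d : ℕ} {w : FreeGroup (Fin d)}

lemma mem_wordValuesIn_of_trace_re_le (ha : a ∈ wordValuesIn w (SU 2)) (hb : b ∈ SU 2)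
    (h : a.1.trace.re ≤ b.1.trace.re) : b ∈ wordValuesIn w (SU 2) := by
  have hcont : Continuous fun x : unitaryGroup (Fin 2) ℂ => x.1.trace.re :=
    Complex.continuous_re.comp continuous_subtype_val.matrix_trace
  have hb_le : b.1.trace.re ≤ (1 : unitaryGroup (Fin 2) ℂ).1.trace.re := by
    simpa using trace_re_le_card b
  obtain ⟨c, hc, hcb⟩ := (isPreconnected_wordValuesIn w (isPreconnected_SU 2)).intermediate_value
    ha (one_mem_wordValuesIn w (one_mem_SU 2)) hcont.continuousOn ⟨h, hb_le⟩
  have hcSU : c ∈ SU 2 := wordValuesIn_subset w (unitaryDet (Fin 2)).ker hc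
  exact mem_wordValuesIn_SU_of_isConj (isConj_of_mem_SU_two hcSU hb hcb) hc

lemma exists_mem_wordValuesIn_trace_re_nonpos
    (h : ∃ a ∈ wordValuesIn w (SU 2), ∃ b ∈ wordValuesIn w (SU 2), -1 = a * b) :
    ∃ g ∈ wordValuesIn w (SU 2), g.1.trace.re ≤ 0 := by
  obtain ⟨a, ha, b, hb, hab⟩ := h
  have htrace : b.1.trace.re = -a.1.trace.re := trace_re_eq_neg_of_mul_eq_neg_one hab.symm
  obtain hneg | hpos := le_total a.1.trace.re 0
  · exact ⟨a, ha, hneg⟩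
  · exact ⟨b, hb, by linarith⟩

end SpecialUnitaryTwo

section SymmetricPower

lemma exists_unitary_mulVec_eq {𝕜 X ι : Type*} [Field 𝕜] [StarRing 𝕜] [Fintype ι] [DecidableEq ι]
    {Φ Ψ : X → ι → 𝕜}
    (hgram : ∀ x y, star (Φ x) ⬝ᵥ Φ y = star (Ψ x) ⬝ᵥ Ψ y) {p : ι → X}
    (hp : LinearIndependent 𝕜 (Φ ∘ p)) :
    ∃ U : unitaryGroup ι 𝕜, ∀ x, U.1 *ᵥ Φ x = Ψ x := by
  let A : Matrix ι ι 𝕜 := (of (Φ ∘ p))ᵀ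
  let B : Matrix ι ι 𝕜 := (of (Ψ ∘ p))ᵀ
  have hA : IsUnit A.det := (isUnit_iff_isUnit_det A).1 (linearIndependent_cols_iff_isUnit.1 hp)
  have hAB (x : X) : Aᴴ *ᵥ Φ x = Bᴴ *ᵥ Ψ x := funext fun j => hgram (p j) x
  have hmul : Aᴴ * A = Bᴴ * B := by
    ext i j
    exact hgram (p i) (p j)
  have hA' : IsUnit Aᴴ.det := by rw [det_conjTranspose]; exact hA.star
  have hUstar : (B * A⁻¹)ᴴ = Aᴴ⁻¹ * Bᴴ := by
    rw [conjTranspose_mul, conjTranspose_nonsing_inv]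
  have hU : B * A⁻¹ ∈ unitaryGroup ι 𝕜 := by
    rw [mem_unitaryGroup_iff', star_eq_conjTranspose, hUstar, mul_assoc, ← mul_assoc Bᴴ, ← hmul,
      mul_nonsing_inv_cancel_right _ _ hA, nonsing_inv_mul _ hA']
  refine ⟨⟨B * A⁻¹, hU⟩, fun x => ?_⟩
  have hinv : (B * A⁻¹)ᴴ *ᵥ Ψ x = Φ x := by
    rw [hUstar, ← mulVec_mulVec, ← hAB, mulVec_mulVec, nonsing_inv_mul _ hA', one_mulVec]
  rw [← hinv, mulVec_mulVec, ← star_eq_conjTranspose, mem_unitaryGroup_iff.1 hU, one_mulVec]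

variable (m : ℕ)

/-- The `m`-th symmetric power of the vector `v ∈ ℂ²`, in coordinates: the monomials of degree `m`
weighted by square roots of binomial coefficients so that inner products become `m`-th powers. -/
noncomputable def symVec (v : Fin 2 → ℂ) : Fin (m + 1) → ℂ :=
  fun k => (√(m.choose k) : ℂ) * (v 0 ^ (k : ℕ) * v 1 ^ (m - k))

lemma star_symVec_dotProduct (u v : Fin 2 → ℂ) :
    star (symVec m u) ⬝ᵥ symVec m v = (star u ⬝ᵥ v) ^ m := by
  have hsqrt (k : ℕ) : (√(m.choose k) : ℂ) * √(m.choose k) = m.choose k := by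
    exact_mod_cast Real.mul_self_sqrt (Nat.cast_nonneg _)
  rw [dotProduct, dotProduct, Fin.sum_univ_two, add_pow, Finset.sum_range]
  refine Finset.sum_congr rfl fun k _ => ?_
  simp only [Pi.star_apply, symVec, Complex.star_def, map_mul, map_pow, Complex.conj_ofReal,
    ← hsqrt, mul_pow]
  ring

lemma linearIndependent_symVec :
    LinearIndependent ℂ (symVec m ∘ fun i : Fin (m + 1) => ![(i : ℂ), 1]) := by
  have hfactor : of (symVec m ∘ fun i : Fin (m + 1) => ![(i : ℂ), 1]) =
      vandermonde (fun i : Fin (m + 1) => (i : ℂ)) *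
        diagonal fun k : Fin (m + 1) => (√(m.choose k) : ℂ) := by
    ext i k
    simp [symVec, mul_diagonal, vandermonde_apply, mul_comm]
  have hinj : Function.Injective fun i : Fin (m + 1) => (i : ℂ) :=
    Nat.cast_injective.comp Fin.val_injective
  suffices IsUnit (of (symVec m ∘ fun i : Fin (m + 1) => ![(i : ℂ), 1])) from
    linearIndependent_rows_iff_isUnit.2 this
  rw [hfactor, isUnit_iff_isUnit_det, det_mul, det_diagonal]
  refine (mul_ne_zero (det_vandermonde_ne_zero_iff.2 hinj)
    (Finset.prod_ne_zero_iff.2 fun k _ => ?_)).isUnit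
  exact_mod_cast Real.sqrt_ne_zero'.2 (Nat.cast_pos.2 (Nat.choose_pos k.is_le))

variable {m}

lemma eq_of_mulVec_symVec_eq {U V : unitaryGroup (Fin (m + 1)) ℂ}
    (h : ∀ v, U.1 *ᵥ symVec m v = V.1 *ᵥ symVec m v) : U = V := by
  let A : Matrix (Fin (m + 1)) (Fin (m + 1)) ℂ :=
    (of (symVec m ∘ fun i : Fin (m + 1) => ![(i : ℂ), 1]))ᵀ
  have hA : IsUnit A := linearIndependent_cols_iff_isUnit.1 (linearIndependent_symVec m)
  refine Subtype.ext (hA.mul_left_injective ?_)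
  ext i j
  exact congr_fun (h _) i

variable (m)

lemma exists_unitary_mulVec_symVec (g : unitaryGroup (Fin 2) ℂ) :
    ∃ U : unitaryGroup (Fin (m + 1)) ℂ, ∀ v, U.1 *ᵥ symVec m v = symVec m (g.1 *ᵥ v) := by
  refine exists_unitary_mulVec_eq (fun u v => ?_) (linearIndependent_symVec m)
  rw [star_symVec_dotProduct, star_symVec_dotProduct, star_mulVec, ← dotProduct_mulVec,
    mulVec_mulVec, ← star_eq_conjTranspose, UnitaryGroup.star_mul_self, one_mulVec]

/-- The representation of `U(2)` on the `m`-th symmetric power of `ℂ²`, in the orthonormal basis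
of weighted monomials; it is determined by its action on the vectors `symVec m v`. -/
noncomputable def symPow : unitaryGroup (Fin 2) ℂ →* unitaryGroup (Fin (m + 1)) ℂ :=
  MonoidHom.mk' (fun g => (exists_unitary_mulVec_symVec m g).choose) fun g h =>
    eq_of_mulVec_symVec_eq fun v => by
      rw [(exists_unitary_mulVec_symVec m (g * h)).choose_spec v, UnitaryGroup.mul_val,
        UnitaryGroup.mul_val, ← mulVec_mulVec, ← mulVec_mulVec,
        (exists_unitary_mulVec_symVec m h).choose_spec v,
        (exists_unitary_mulVec_symVec m g).choose_spec]

lemma symPow_mulVec_symVec (g : unitaryGroup (Fin 2) ℂ) (v : Fin 2 → ℂ) :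
    (symPow m g).1 *ᵥ symVec m v = symVec m (g.1 *ᵥ v) :=
  (exists_unitary_mulVec_symVec m g).choose_spec v

lemma symPow_diagonalTorus (t : Fin 2 → Circle) :
    symPow m (diagonalTorus t) =
      diagonalTorus fun k : Fin (m + 1) => t 0 ^ (k : ℕ) * t 1 ^ (m - k) := by
  refine eq_of_mulVec_symVec_eq fun v => ?_
  rw [symPow_mulVec_symVec]
  ext k
  simp only [symVec, coe_diagonalTorus, mulVec_diagonal, Circle.coe_mul, Circle.coe_pow, mul_pow]
  ring

lemma symPow_diagonalTorus_inv (z : Circle) :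
    symPow m (diagonalTorus ![z, z⁻¹]) =
      diagonalTorus fun k : Fin (m + 1) => z⁻¹ ^ m * (z ^ 2) ^ (k : ℕ) := by
  rw [symPow_diagonalTorus]
  congr 1
  funext k
  calc z ^ (k : ℕ) * z⁻¹ ^ (m - k)
      = z⁻¹ ^ (m - k) * (z⁻¹ ^ (k : ℕ) * (z ^ (k : ℕ) * z ^ (k : ℕ))) := by
        rw [inv_pow z k, inv_mul_cancel_left, mul_comm]
    _ = z⁻¹ ^ m * (z ^ 2) ^ (k : ℕ) := by
        rw [← mul_assoc, pow_sub_mul_pow _ k.is_le, sq, mul_pow]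

lemma mapsTo_symPow_SU : Set.MapsTo (symPow m) (SU 2) (SU (m + 1)) := by
  intro g hg
  obtain ⟨t, ht, htg⟩ := exists_isConj_diagonalTorus_of_mem_SU hg
  have hprod : ∏ k : Fin (m + 1), t 0 ^ (k : ℕ) * t 1 ^ (m - k) = 1 := by
    have hrev : ∏ k : Fin (m + 1), t 1 ^ (m - k) = ∏ k : Fin (m + 1), t 1 ^ (k : ℕ) := by
      rw [← Equiv.prod_comp Fin.revPerm fun k : Fin (m + 1) => t 1 ^ (k : ℕ)]
      simp only [Fin.revPerm_apply, Fin.val_rev, Nat.add_sub_add_right]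
    rw [Finset.prod_mul_distrib, hrev, ← Finset.prod_mul_distrib]
    refine Finset.prod_eq_one fun k _ => ?_
    rw [← mul_pow, ← Fin.prod_univ_two, ht, one_pow]
  have hmem : symPow m (diagonalTorus t) ∈ SU (m + 1) := by
    rwa [symPow_diagonalTorus, diagonalTorus_mem_SU]
  exact (isConj_iff_eq.1 ((unitaryDet _).map_isConj ((symPow m).map_isConj htg))).symm.trans hmem

end SymmetricPower

section Waring

lemma trace_re_diagonalTorus_exp (θ : ℝ) :
    (diagonalTorus ![Circle.exp θ, (Circle.exp θ)⁻¹]).1.trace.re = 2 * Real.cos θ := by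
  rw [coe_diagonalTorus, trace_diagonal, Fin.sum_univ_two]
  change ((Circle.exp θ : ℂ) + ((Circle.exp θ)⁻¹ : Circle)).re = _
  rw [Circle.coe_inv_eq_conj, Complex.add_conj, Complex.ofReal_re, Circle.coe_exp,
    Complex.exp_ofReal_mul_I_re]

lemma isPrimitiveRoot_exp_pi_div_sq {n : ℕ} (hn : n ≠ 0) :
    IsPrimitiveRoot (Circle.exp (Real.pi / n) ^ 2) n := by
  have hexp : Circle.coeHom (Circle.exp (Real.pi / n) ^ 2) =
      Complex.exp (2 * Real.pi * Complex.I / n) := by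
    rw [← Circle.exp_nsmul]
    change (Circle.exp _ : ℂ) = _
    rw [Circle.coe_exp]
    push_cast
    ring_nf
  exact .of_map_of_injective (f := Circle.coeHom) (hexp ▸ Complex.isPrimitiveRoot_exp n hn)
    Circle.coe_injective

lemma two_mul_cos_pi_div_nonneg {n : ℕ} (hn : 2 ≤ n) : 0 ≤ 2 * Real.cos (Real.pi / n) := by
  refine mul_nonneg zero_le_two (Real.cos_nonneg_of_neg_pi_div_two_le_of_le ?_ ?_)
  · linarith [Real.pi_pos, div_nonneg Real.pi_nonneg n.cast_nonneg]
  · exact div_le_div_of_nonneg_left Real.pi_nonneg two_pos (by exact_mod_cast hn)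

/- The bound `2 * cos (π / n)` is the trace of the element of `SU(2)` whose symmetric power is
conjugate to the scaled cyclic shift. -/
theorem su_waring_square_general {d n : ℕ} (w : FreeGroup (Fin d)) (hn : n ≠ 0)
    (h : ∃ g ∈ wordValuesIn w (SU 2), g.1.trace.re ≤ 2 * Real.cos (Real.pi / n)) :
    ∀ x ∈ SU n, ∃ a ∈ wordValuesIn w (SU n), ∃ b ∈ wordValuesIn w (SU n), x = a * b := by
  obtain ⟨m, rfl⟩ := Nat.exists_eq_succ_of_ne_zero hn
  obtain ⟨g, hg, hgtrace⟩ := h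
  set z := Circle.exp (Real.pi / (m + 1 : ℕ))
  let T : unitaryGroup (Fin 2) ℂ := diagonalTorus ![z, z⁻¹]
  have hTSU : T ∈ SU 2 := by
    rw [diagonalTorus_mem_SU, Fin.prod_univ_two]
    exact mul_inv_cancel z
  have hTtrace : g.1.trace.re ≤ T.1.trace.re := hgtrace.trans_eq (trace_re_diagonalTorus_exp _).symm
  have hT : T ∈ wordValuesIn w (SU 2) := mem_wordValuesIn_of_trace_re_le hg hTSU hTtrace
  have hTinv : T⁻¹ ∈ wordValuesIn w (SU 2) :=
    mem_wordValuesIn_of_trace_re_le hg ((unitaryDet (Fin 2)).ker.inv_mem hTSU)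
      (hTtrace.trans_eq (trace_re_inv T).symm)
  intro x hx
  obtain ⟨a, b, ha, hb, hab⟩ :=
    exists_isConj_mul_isConj_inv_eq (isPrimitiveRoot_exp_pi_div_sq hn) (z⁻¹ ^ m) hx
  rw [← symPow_diagonalTorus_inv] at ha hb
  rw [← map_inv] at hb
  exact ⟨a, mem_wordValuesIn_SU_of_isConj ha (map_mem_wordValuesIn w _ (mapsTo_symPow_SU m) hT),
    b, mem_wordValuesIn_SU_of_isConj hb (map_mem_wordValuesIn w _ (mapsTo_symPow_SU m) hTinv), hab⟩

end Waring

/-- If every element of `SU(2)` is a product of two `w`-values, then so is every element of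
`SU(n)` for every `n ≥ 2`. -/
theorem su_waring_square {d : ℕ} (w : FreeGroup (Fin d))
    (h : ∀ x ∈ SU 2, ∃ a ∈ wordValuesIn w (SU 2), ∃ b ∈ wordValuesIn w (SU 2), x = a * b) :
    ∀ n : ℕ, 2 ≤ n → ∀ x ∈ SU n,
      ∃ a ∈ wordValuesIn w (SU n), ∃ b ∈ wordValuesIn w (SU n), x = a * b := by
  intro n hn
  obtain ⟨g, hg, hgtrace⟩ := exists_mem_wordValuesIn_trace_re_nonpos (h (-1) neg_one_mem_SU_two)
  exact su_waring_square_general w (by lia) ⟨g, hg, hgtrace.trans (two_mul_cos_pi_div_nonneg hn)⟩
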